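/- arXiv:2009.10845 — 2 statements merged into one kernel-verified Lean document; each statement's English description precedes it below -/
import Mathlib

section
/- For any graph G on n vertices and any odd integers k ≥ t ≥ 1, (w_k(G))^t ≥ (w_t(G))^k, where w_j(G) is the number of walks of length j in G divided by n. -/
/-- The number of walks of length `k` in a graph `G` on vertex set `Fin n`. -/
noncomputable def walkCount (n k : ℕ) (G : SimpleGraph (Fin n)) : ℕ :=
  Nat.card {f : Fin (k + 1) → Fin n //
    ∀ i : Fin k, G.Adj (f i.castSucc) (f i.succ)}

/-- `w_j(G)`: the number of walks of length `j` in `G` divided by `n`. -/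
noncomputable def w (n j : ℕ) (G : SimpleGraph (Fin n)) : ℝ :=
  (walkCount n j G : ℝ) / n

/-!
Let `A` be the adjacency matrix, or any symmetric nonnegative matrix, let `u i = A ^ i *ᵥ 1`, and
let `W t` be the sum of the entries of `u t`. For `i + j + 1 = t`, the weight
`A x y * (u i x * u j y)` of the walks of length `t` with step `i` from `x` to `y` sums to `W t`,
while the weight `A x y * (u (j + 1) x * u (i + 1) y)` sums to `W (t + 2)`: these are the walks that
go from `x` to `y` after `j + 1` steps. The log-sum inequality `sum_mul_log_div_le` for these two
weights reads `D (i + 1) j - D i (j + 1) ≤ W t * log (W (t + 2) / W t)`, where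
`D i j = ∑ x, u i x * u j x * log (u i x / u j x)`. Summing over `i < t`, the left-hand side
telescopes to `D t 0 - D 0 t = -2 * D 0 t`, and `D 0 t ≤ W t * log (card V / W t)` by the log-sum
inequality again. The outcome is the case `k = t + 2`; the general one follows by iteration.
-/

open Finset Matrix

/-- Transitivity of `a ^ (1 / l) ≤ b ^ (1 / m)`, written without roots. -/
lemma pow_le_pow_trans {R : Type*} [CommSemiring R] [LinearOrder R] [IsStrictOrderedRing R]
    {a b c : R} {l m n : ℕ} (ha : 0 ≤ a) (hb : 0 ≤ b) (hc : 0 ≤ c) (hm : m ≠ 0)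
    (hab : a ^ m ≤ b ^ l) (hbc : b ^ n ≤ c ^ m) : a ^ n ≤ c ^ l := by
  refine le_of_pow_le_pow_left₀ hm (pow_nonneg hc l) ?_
  calc (a ^ n) ^ m = (a ^ m) ^ n := pow_right_comm _ _ _
    _ ≤ (b ^ l) ^ n := pow_le_pow_left₀ (pow_nonneg ha m) hab n
    _ = (b ^ n) ^ l := pow_right_comm _ _ _
    _ ≤ (c ^ m) ^ l := pow_le_pow_left₀ (pow_nonneg hb n) hbc l
    _ = (c ^ l) ^ m := pow_right_comm _ _ _

lemma mul_log_div_le {p q c : ℝ} (hp : 0 ≤ p) (hq : 0 ≤ q) (hpq : 0 < p → 0 < q) (hc : 0 < c) :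
    p * Real.log (q / p) ≤ p * Real.log c + (q / c - p) := by
  obtain rfl | hp := hp.eq_or_lt
  · simpa using div_nonneg hq hc.le
  have hq := hpq hp
  calc p * Real.log (q / p) = p * Real.log c + p * Real.log (q / (c * p)) := by
        rw [← mul_add, ← Real.log_mul (by positivity) (by positivity)]
        congr 2
        field_simp
    _ ≤ p * Real.log c + p * (q / (c * p) - 1) := by
        gcongr
        exact Real.log_le_sub_one_of_pos (by positivity)
    _ = p * Real.log c + (q / c - p) := by field_simp

lemma sum_mul_log_div_le {ι : Type*} {s : Finset ι} {p q : ι → ℝ} (hp : ∀ i ∈ s, 0 ≤ p i)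
    (hq : ∀ i ∈ s, 0 ≤ q i) (hpq : ∀ i ∈ s, 0 < p i → 0 < q i) :
    ∑ i ∈ s, p i * Real.log (q i / p i) ≤
      (∑ i ∈ s, p i) * Real.log ((∑ i ∈ s, q i) / ∑ i ∈ s, p i) := by
  obtain hP | hP := (sum_nonneg hp).eq_or_lt
  · have hp0 : ∀ i ∈ s, p i = 0 := (sum_eq_zero_iff_of_nonneg hp).mp hP.symm
    simp +contextual [hp0]
  obtain ⟨i, hi, hpi⟩ := (sum_pos_iff_of_nonneg hp).mp hP
  have hQ : 0 < ∑ i ∈ s, q i := sum_pos' hq ⟨i, hi, hpq i hi hpi⟩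
  set c := (∑ i ∈ s, q i) / ∑ i ∈ s, p i with hc
  calc ∑ i ∈ s, p i * Real.log (q i / p i)
      ≤ ∑ i ∈ s, (p i * Real.log c + (q i / c - p i)) :=
        sum_le_sum fun i hi => mul_log_div_le (hp i hi) (hq i hi) (hpq i hi) (div_pos hQ hP)
    _ = (∑ i ∈ s, p i) * Real.log c + ((∑ i ∈ s, q i) / c - ∑ i ∈ s, p i) := by
        rw [sum_add_distrib, sum_sub_distrib, ← sum_mul, ← sum_div]
    _ = (∑ i ∈ s, p i) * Real.log c := by
        rw [hc, div_div_cancel₀ hQ.ne', sub_self, add_zero]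

section WalkWeight

variable {V R : Type*} [Fintype V] [DecidableEq V] [Semiring R]

/-- The total weight of the walks of length `k` from `x`, where a walk is any sequence of vertices
and its weight is the product of the entries of `A` along its steps. -/
def walkWeight (A : Matrix V V R) (k : ℕ) (x : V) : R :=
  (A ^ k *ᵥ 1) x

/-- The total weight of the walks of length `k`. -/
def totalWalkWeight (A : Matrix V V R) (k : ℕ) : R :=
  ∑ x, walkWeight A k x

/-- For symmetric `A`, the total weight of the walks of length `i + j + 1` whose step number `i`,
counted from `0`, is `e.1 → e.2`. -/
def stepWeight (A : Matrix V V R) (i j : ℕ) (e : V × V) : R :=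
  A e.1 e.2 * (walkWeight A i e.1 * walkWeight A j e.2)

variable {A : Matrix V V R}

@[simp]
lemma walkWeight_zero (x : V) : walkWeight A 0 x = 1 := by
  simp [walkWeight]

lemma walkWeight_succ (k : ℕ) (x : V) : walkWeight A (k + 1) x = ∑ y, A x y * walkWeight A k y := by
  simp only [walkWeight, pow_succ', ← mulVec_mulVec]
  rfl

section Nonneg

variable [PartialOrder R] [IsOrderedRing R]

lemma walkWeight_nonneg (hA : ∀ x y, 0 ≤ A x y) (k : ℕ) (x : V) : 0 ≤ walkWeight A k x :=
  sum_nonneg fun y _ => mul_nonneg (pow_apply_nonneg hA k x y) zero_le_one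

lemma totalWalkWeight_nonneg (hA : ∀ x y, 0 ≤ A x y) (k : ℕ) : 0 ≤ totalWalkWeight A k :=
  sum_nonneg fun x _ => walkWeight_nonneg hA k x

lemma stepWeight_nonneg (hA : ∀ x y, 0 ≤ A x y) (i j : ℕ) (e : V × V) : 0 ≤ stepWeight A i j e :=
  mul_nonneg (hA _ _) (mul_nonneg (walkWeight_nonneg hA i _) (walkWeight_nonneg hA j _))

end Nonneg

section Pos

variable [PartialOrder R] [IsStrictOrderedRing R]

lemma walkWeight_succ_pos (hA : ∀ x y, 0 ≤ A x y) {k : ℕ} {x y : V} (hxy : 0 < A x y)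
    (hy : 0 < walkWeight A k y) : 0 < walkWeight A (k + 1) x := by
  rw [walkWeight_succ]
  exact sum_pos' (fun z _ => mul_nonneg (hA x z) (walkWeight_nonneg hA k z))
    ⟨y, mem_univ y, mul_pos hxy hy⟩

lemma stepWeight_pos_iff (hA : ∀ x y, 0 ≤ A x y) {i j : ℕ} {e : V × V} :
    0 < stepWeight A i j e ↔
      0 < A e.1 e.2 ∧ 0 < walkWeight A i e.1 ∧ 0 < walkWeight A j e.2 := by
  refine ⟨fun h => ?_, fun ⟨he, hi, hj⟩ => mul_pos he (mul_pos hi hj)⟩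
  have hij := right_ne_zero_of_mul h.ne'
  exact ⟨(hA _ _).lt_of_ne' (left_ne_zero_of_mul h.ne'),
    (walkWeight_nonneg hA i _).lt_of_ne' (left_ne_zero_of_mul hij),
    (walkWeight_nonneg hA j _).lt_of_ne' (right_ne_zero_of_mul hij)⟩

lemma stepWeight_succ_succ_pos (hA : ∀ x y, 0 ≤ A x y) (hs : A.IsSymm) {i j : ℕ} {e : V × V}
    (h : 0 < stepWeight A i j e) : 0 < stepWeight A (j + 1) (i + 1) e := by
  rw [stepWeight_pos_iff hA] at h ⊢
  obtain ⟨he, hi, hj⟩ := h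
  exact ⟨he, walkWeight_succ_pos hA he hj, walkWeight_succ_pos hA (hs.apply e.1 e.2 ▸ he) hi⟩

end Pos

end WalkWeight

section CommSemiring

variable {V R : Type*} [Fintype V] [DecidableEq V] [CommSemiring R] {A : Matrix V V R}

lemma sum_walkWeight_mul_walkWeight (hs : A.IsSymm) (i j : ℕ) :
    ∑ x, walkWeight A i x * walkWeight A j x = totalWalkWeight A (i + j) := by
  calc (A ^ i *ᵥ 1) ⬝ᵥ (A ^ j *ᵥ 1) = 1 ⬝ᵥ (A ^ (i + j) *ᵥ 1) := by
        rw [pow_add, ← mulVec_mulVec, dotProduct_mulVec 1, ← mulVec_transpose, (hs.pow i).eq]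
    _ = totalWalkWeight A (i + j) := one_dotProduct _

lemma sum_stepWeight_mul_fst (i j : ℕ) (f : V → R) :
    ∑ e, stepWeight A i j e * f e.1 = ∑ x, walkWeight A i x * walkWeight A (j + 1) x * f x := by
  simp_rw [Fintype.sum_prod_type, stepWeight, walkWeight_succ, mul_sum, sum_mul]
  exact sum_congr rfl fun x _ => sum_congr rfl fun y _ => by ring

lemma stepWeight_swap (hs : A.IsSymm) (i j : ℕ) (e : V × V) :
    stepWeight A i j e.swap = stepWeight A j i e := by
  rw [stepWeight, Prod.fst_swap, Prod.snd_swap, hs.apply, mul_comm (walkWeight A i _), stepWeight]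

lemma sum_stepWeight_mul_snd (hs : A.IsSymm) (i j : ℕ) (f : V → R) :
    ∑ e, stepWeight A i j e * f e.2 = ∑ x, walkWeight A (i + 1) x * walkWeight A j x * f x := by
  rw [← (Equiv.prodComm V V).sum_comp]
  simp only [Equiv.prodComm_apply, stepWeight_swap hs, Prod.snd_swap, sum_stepWeight_mul_fst,
    mul_comm (walkWeight A j _)]

lemma sum_stepWeight (hs : A.IsSymm) (i j : ℕ) :
    ∑ e, stepWeight A i j e = totalWalkWeight A (i + j + 1) := by
  simpa [sum_walkWeight_mul_walkWeight hs, add_assoc] using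
    sum_stepWeight_mul_fst (A := A) i j fun _ => 1

lemma totalWalkWeight_add_two_pos [PartialOrder R] [IsStrictOrderedRing R]
    (hA : ∀ x y, 0 ≤ A x y) (hs : A.IsSymm) {t : ℕ} (ht : t ≠ 0) (hpos : 0 < totalWalkWeight A t) :
    0 < totalWalkWeight A (t + 2) := by
  obtain ⟨k, rfl⟩ := Nat.exists_eq_add_one_of_ne_zero ht
  rw [← zero_add k, ← sum_stepWeight hs,
    sum_pos_iff_of_nonneg fun e _ => stepWeight_nonneg hA 0 k e] at hpos
  obtain ⟨e, -, he⟩ := hpos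
  rw [show k + 1 + 2 = k + 1 + 1 + 1 from rfl, ← sum_stepWeight hs (k + 1) 1]
  exact sum_pos' (fun e _ => stepWeight_nonneg hA _ _ e)
    ⟨e, mem_univ e, stepWeight_succ_succ_pos hA hs he⟩

lemma sum_prod_eq_dotProduct_walkWeight (A : Matrix V V R) (k : ℕ) (g : V → R) :
    ∑ f : Fin (k + 1) → V, g (f 0) * ∏ i : Fin k, A (f i.castSucc) (f i.succ) =
      g ⬝ᵥ walkWeight A k := by
  induction k generalizing g with
  | zero => simpa [dotProduct] using (Equiv.funUnique (Fin 1) V).sum_comp g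
  | succ k ih =>
    rw [← (Fin.consEquiv fun _ => V).sum_comp, Fintype.sum_prod_type]
    refine sum_congr rfl fun x _ => ?_
    calc ∑ f : Fin (k + 1) → V,
          g x * ∏ i : Fin (k + 1), A (Fin.cons (α := fun _ => V) x f i.castSucc) (f i)
        = g x * ∑ f : Fin (k + 1) → V, A x (f 0) * ∏ i : Fin k, A (f i.castSucc) (f i.succ) := by
          simp [Fin.prod_univ_succ, mul_sum]
      _ = g x * walkWeight A (k + 1) x := by rw [ih, walkWeight_succ, dotProduct]

end CommSemiring

section MeanWalkWeight

variable {V : Type*} [Fintype V] [DecidableEq V] {A : Matrix V V ℝ}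

/-- The comparison of the walk weights of lengths `i` and `j` under the (unnormalised) law of the
vertex that a random walk of length `i + j` visits at time `i`, for symmetric `A`. The logarithm of
a ratio with a vanishing numerator or denominator is irrelevant: its coefficient vanishes too. -/
noncomputable def walkLogRatio (A : Matrix V V ℝ) (i j : ℕ) : ℝ :=
  ∑ x, walkWeight A i x * walkWeight A j x * Real.log (walkWeight A i x / walkWeight A j x)

/-- The total weight of the walks of length `k` divided by the number of vertices, which is `w_k`
when `A` is the adjacency matrix of a graph. -/
noncomputable def meanWalkWeight (A : Matrix V V ℝ) (k : ℕ) : ℝ :=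
  totalWalkWeight A k / Fintype.card V

lemma meanWalkWeight_nonneg (hA : ∀ x y, 0 ≤ A x y) (k : ℕ) : 0 ≤ meanWalkWeight A k :=
  div_nonneg (totalWalkWeight_nonneg hA k) (Nat.cast_nonneg _)

lemma walkLogRatio_swap (A : Matrix V V ℝ) (i j : ℕ) :
    walkLogRatio A i j = -walkLogRatio A j i := by
  rw [walkLogRatio, walkLogRatio, ← sum_neg_distrib]
  refine sum_congr rfl fun x _ => ?_
  rw [← inv_div, Real.log_inv]
  ring

lemma walkLogRatio_zero_left_le (hA : ∀ x y, 0 ≤ A x y) (t : ℕ) :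
    walkLogRatio A 0 t ≤ totalWalkWeight A t * -Real.log (meanWalkWeight A t) := by
  simpa [walkLogRatio, meanWalkWeight, totalWalkWeight, ← Real.log_inv] using
    sum_mul_log_div_le (s := univ) (q := fun _ : V => (1 : ℝ))
      (fun x _ => walkWeight_nonneg hA t x) (fun _ _ => zero_le_one) fun _ _ _ => one_pos

lemma stepWeight_mul_log_div (hA : ∀ x y, 0 ≤ A x y) (hs : A.IsSymm) (i j : ℕ) (e : V × V) :
    stepWeight A i j e * Real.log (stepWeight A (j + 1) (i + 1) e / stepWeight A i j e) =
      stepWeight A i j e * Real.log (walkWeight A (i + 1) e.2 / walkWeight A j e.2) -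
        stepWeight A i j e * Real.log (walkWeight A i e.1 / walkWeight A (j + 1) e.1) := by
  obtain h | h := (stepWeight_nonneg hA i j e).eq_or_lt
  · simp [← h]
  obtain ⟨he, hi, hj⟩ := (stepWeight_pos_iff hA).mp h
  obtain ⟨-, hj', hi'⟩ := (stepWeight_pos_iff hA).mp (stepWeight_succ_succ_pos hA hs h)
  rw [← mul_sub, ← Real.log_div (by positivity) (by positivity), stepWeight, stepWeight]
  congr 2
  field_simp

lemma walkLogRatio_sub_le (hA : ∀ x y, 0 ≤ A x y) (hs : A.IsSymm) (i j : ℕ) :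
    walkLogRatio A (i + 1) j - walkLogRatio A i (j + 1) ≤ totalWalkWeight A (i + j + 1) *
      Real.log (totalWalkWeight A (i + j + 3) / totalWalkWeight A (i + j + 1)) := by
  calc walkLogRatio A (i + 1) j - walkLogRatio A i (j + 1)
      = ∑ e, stepWeight A i j e *
          Real.log (stepWeight A (j + 1) (i + 1) e / stepWeight A i j e) := by
        simp_rw [stepWeight_mul_log_div hA hs, sum_sub_distrib]
        rw [sum_stepWeight_mul_snd hs i j fun y =>
            Real.log (walkWeight A (i + 1) y / walkWeight A j y),
          sum_stepWeight_mul_fst i j fun x => Real.log (walkWeight A i x / walkWeight A (j + 1) x),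
          walkLogRatio, walkLogRatio]
    _ ≤ (∑ e, stepWeight A i j e) *
          Real.log ((∑ e, stepWeight A (j + 1) (i + 1) e) / ∑ e, stepWeight A i j e) :=
        sum_mul_log_div_le (fun e _ => stepWeight_nonneg hA i j e)
          (fun e _ => stepWeight_nonneg hA _ _ e) fun _ _ => stepWeight_succ_succ_pos hA hs
    _ = _ := by
        rw [sum_stepWeight hs, sum_stepWeight hs, show j + 1 + (i + 1) + 1 = i + j + 3 by ring]

lemma neg_two_mul_walkLogRatio_le (hA : ∀ x y, 0 ≤ A x y) (hs : A.IsSymm) (t : ℕ) :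
    -2 * walkLogRatio A 0 t ≤
      t * (totalWalkWeight A t * Real.log (totalWalkWeight A (t + 2) / totalWalkWeight A t)) := by
  calc -2 * walkLogRatio A 0 t = walkLogRatio A t (t - t) - walkLogRatio A 0 (t - 0) := by
        rw [Nat.sub_self, Nat.sub_zero, walkLogRatio_swap A t 0]
        ring
    _ = ∑ i ∈ range t, (walkLogRatio A (i + 1) (t - (i + 1)) - walkLogRatio A i (t - i)) :=
        (sum_range_sub (fun i => walkLogRatio A i (t - i)) t).symm
    _ ≤ #(range t) • (totalWalkWeight A t *
          Real.log (totalWalkWeight A (t + 2) / totalWalkWeight A t)) := by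
        refine sum_le_card_nsmul _ _ _ fun i hi => ?_
        obtain ⟨j, rfl⟩ := Nat.exists_eq_add_of_lt (mem_range.mp hi)
        rw [show i + j + 1 - (i + 1) = j by omega, show i + j + 1 - i = j + 1 by omega]
        exact walkLogRatio_sub_le hA hs i j
    _ = _ := by rw [card_range, nsmul_eq_mul]

lemma meanWalkWeight_pos_iff (hA : ∀ x y, 0 ≤ A x y) {k : ℕ} :
    0 < meanWalkWeight A k ↔ 0 < totalWalkWeight A k ∧ (0 : ℝ) < Fintype.card V := by
  refine ⟨fun h => ?_, fun ⟨hW, hV⟩ => div_pos hW hV⟩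
  obtain ⟨hW, hV⟩ := div_ne_zero_iff.mp h.ne'
  exact ⟨(totalWalkWeight_nonneg hA k).lt_of_ne' hW, (Nat.cast_nonneg _).lt_of_ne' hV⟩

lemma meanWalkWeight_add_two_pos (hA : ∀ x y, 0 ≤ A x y) (hs : A.IsSymm) {t : ℕ} (ht : t ≠ 0)
    (hpos : 0 < meanWalkWeight A t) : 0 < meanWalkWeight A (t + 2) := by
  rw [meanWalkWeight_pos_iff hA] at hpos ⊢
  exact ⟨totalWalkWeight_add_two_pos hA hs ht hpos.1, hpos.2⟩

lemma add_two_mul_log_meanWalkWeight_le (hA : ∀ x y, 0 ≤ A x y) (hs : A.IsSymm) {t : ℕ}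
    (ht : t ≠ 0) (hpos : 0 < meanWalkWeight A t) :
    (t + 2) * Real.log (meanWalkWeight A t) ≤ t * Real.log (meanWalkWeight A (t + 2)) := by
  obtain ⟨hW, hV⟩ := (meanWalkWeight_pos_iff hA).mp hpos
  have hratio : totalWalkWeight A (t + 2) / totalWalkWeight A t =
      meanWalkWeight A (t + 2) / meanWalkWeight A t := (div_div_div_cancel_right₀ hV.ne' _ _).symm
  have key : 2 * Real.log (meanWalkWeight A t) ≤
      t * Real.log (meanWalkWeight A (t + 2) / meanWalkWeight A t) := by
    refine le_of_mul_le_mul_left ?_ hW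
    rw [← hratio]
    linarith [neg_two_mul_walkLogRatio_le hA hs t, walkLogRatio_zero_left_le hA t]
  rw [Real.log_div (meanWalkWeight_add_two_pos hA hs ht hpos).ne' hpos.ne'] at key
  linarith

lemma meanWalkWeight_pow_add_two_le (hA : ∀ x y, 0 ≤ A x y) (hs : A.IsSymm) {t : ℕ} (ht : t ≠ 0) :
    meanWalkWeight A t ^ (t + 2) ≤ meanWalkWeight A (t + 2) ^ t := by
  obtain h | h := (meanWalkWeight_nonneg hA t).eq_or_lt
  · rw [← h, zero_pow (by omega)]
    exact pow_nonneg (meanWalkWeight_nonneg hA _) _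
  have h' := meanWalkWeight_add_two_pos hA hs ht h
  rw [← Real.log_le_log_iff (pow_pos h _) (pow_pos h' _), Real.log_pow, Real.log_pow]
  exact_mod_cast add_two_mul_log_meanWalkWeight_le hA hs ht h

lemma meanWalkWeight_pow_add_two_mul_le (hA : ∀ x y, 0 ≤ A x y) (hs : A.IsSymm) {t : ℕ}
    (ht : t ≠ 0) (m : ℕ) :
    meanWalkWeight A t ^ (t + 2 * m) ≤ meanWalkWeight A (t + 2 * m) ^ t := by
  induction m with
  | zero => rfl
  | succ m ih =>
    have hk : t + 2 * m ≠ 0 := by omega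
    exact pow_le_pow_trans (meanWalkWeight_nonneg hA _) (meanWalkWeight_nonneg hA _)
      (meanWalkWeight_nonneg hA _) hk ih (meanWalkWeight_pow_add_two_le hA hs hk)

end MeanWalkWeight

theorem erdos_simonovits_general {V : Type*} [Fintype V] [DecidableEq V] {A : Matrix V V ℝ}
    (hA : ∀ x y, 0 ≤ A x y) (hs : A.IsSymm) {t k : ℕ} (hparity : t ≡ k [MOD 2]) (htk : t ≤ k) :
    meanWalkWeight A t ^ k ≤ meanWalkWeight A k ^ t := by
  obtain rfl | ht := eq_or_ne t 0
  · simpa [meanWalkWeight, totalWalkWeight] using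
      pow_le_one₀ (by positivity) (div_self_le_one (Fintype.card V : ℝ))
  obtain ⟨m, hm⟩ := (Nat.modEq_iff_dvd' htk).mp hparity
  obtain rfl : k = t + 2 * m := by omega
  exact meanWalkWeight_pow_add_two_mul_le hA hs ht m

lemma walkCount_eq_totalWalkWeight (n k : ℕ) (G : SimpleGraph (Fin n)) [DecidableRel G.Adj] :
    (walkCount n k G : ℝ) = totalWalkWeight (G.adjMatrix ℝ) k := by
  rw [totalWalkWeight, ← one_dotProduct, ← sum_prod_eq_dotProduct_walkWeight, walkCount,
    Nat.card_eq_fintype_card, Fintype.card_subtype, natCast_card_filter]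
  exact sum_congr rfl fun f _ => by simp [SimpleGraph.adjMatrix_apply, prod_ite_zero]

lemma w_eq_meanWalkWeight (n k : ℕ) (G : SimpleGraph (Fin n)) [DecidableRel G.Adj] :
    w n k G = meanWalkWeight (G.adjMatrix ℝ) k := by
  rw [w, walkCount_eq_totalWalkWeight, meanWalkWeight, Fintype.card_fin]

/-- Erdős–Simonovits conjecture: for odd `k ≥ t ≥ 1`,
`w_k(G)^t ≥ w_t(G)^k`. -/
theorem erdos_simonovits (n k t : ℕ) (G : SimpleGraph (Fin n))
    (hk : Odd k) (ht : Odd t) (ht1 : 1 ≤ t) (htk : t ≤ k) :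
    w n k G ^ t ≥ w n t G ^ k := by
  classical
  rw [ge_iff_le, w_eq_meanWalkWeight, w_eq_meanWalkWeight]
  exact erdos_simonovits_general (fun x y => by simp [SimpleGraph.adjMatrix_apply, ite_nonneg])
    G.isSymm_adjMatrix ((Nat.odd_iff.mp ht).trans (Nat.odd_iff.mp hk).symm) htk
end

section
/- For any graph G on n vertices and any odd t ≥ 1, the number of closed-form inequality n^{k−t} · |Hom(P_k; G)|^t ≥ |Hom(P_t; G)|^k holds for all odd k ≥ t. -/
/-- The number of graph homomorphisms from `F` to `G`. -/
noncomputable def homCount {α β : Type*} (F : SimpleGraph α) (G : SimpleGraph β) : ℕ :=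
  Nat.card (F →g G)

/-
For a nonnegative symmetric matrix `A` and a nonnegative vector `u`, put `f i = A ^ i u` and
`m k = ⟨u, A ^ k u⟩`. In a random walk `u`-weighted at both ends, of length `t = i + j + 1`, the
edge `(a, b)` traversed after `j` steps has law `A a b * f j a * f i b / m t`. Traversing it three
times (`a, b, a, b`) instead of once gives a walk of length `t + 2`, whose middle traversal `(b, a)`
we compare with the law `A a b * f (i + 1) a * f (j + 1) b / m (t + 2)` of that edge in a genuinely
random walk of length `t + 2`. By the log sum inequality, the sum of
`f i a * f (t - i) a * log (f i a / f (t - i) a)` over all `a` grows by at most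
`m t * log (m (t + 2) / m t)` when `i` grows by one. It is antisymmetric under `i ↦ t - i`, and at
`i = t` it is at least `m t * log (m t / m 0)`, again by the log sum inequality. Telescoping from
`i = 0` to `i = t` therefore gives `m t ^ (t + 2) ≤ m 0 ^ 2 * m (t + 2) ^ t`, in other words
`(m t / m 0) ^ (1 / t)` does not decrease when `t` grows by two. For the adjacency matrix and the
all-ones vector, `m k` counts the homomorphisms from `P_k`.
-/

open Finset Matrix Real

lemma sum_mul_log_sub_log_le {ι : Type*} (s : Finset ι) {p q : ι → ℝ}
    (hp : ∀ i ∈ s, 0 ≤ p i) (hq : ∀ i ∈ s, 0 ≤ q i) (hpq : ∀ i ∈ s, q i = 0 → p i = 0) :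
    ∑ i ∈ s, p i * (log (q i) - log (p i)) ≤
      (∑ i ∈ s, p i) * (log (∑ i ∈ s, q i) - log (∑ i ∈ s, p i)) := by
  set P := ∑ i ∈ s, p i with hP_def
  set Q := ∑ i ∈ s, q i
  rcases (sum_nonneg hp).eq_or_lt with hP | hP
  · have hp0 := (sum_eq_zero_iff_of_nonneg hp).1 hP.symm
    rw [sum_eq_zero fun i hi ↦ by rw [hp0 i hi, zero_mul], hP_def, ← hP, zero_mul]
  have hQ : 0 < Q := by
    refine (sum_nonneg hq).lt_of_ne' fun hQ ↦ hP.ne' (sum_eq_zero fun i hi ↦ hpq i hi ?_)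
    exact (sum_eq_zero_iff_of_nonneg hq).1 hQ i hi
  have tangent : ∀ i ∈ s, p i * (log (q i) - log (p i)) ≤
      p i * (log Q - log P) + (P / Q * q i - p i) := by
    intro i hi
    rcases (hp i hi).eq_or_lt with hpi | hpi
    · have := hq i hi
      rw [← hpi]
      simp only [zero_mul, zero_add, sub_zero]
      positivity
    have hqi : 0 < q i := (hq i hi).lt_of_ne' fun h ↦ hpi.ne' (hpq i hi h)
    have hlog := log_le_sub_one_of_pos (show 0 < P * q i / (Q * p i) by positivity)
    rw [log_div (by positivity) (by positivity), log_mul hP.ne' hqi.ne',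
      log_mul hQ.ne' hpi.ne'] at hlog
    calc p i * (log (q i) - log (p i))
        = p i * (log Q - log P) + p i * (log P + log (q i) - (log Q + log (p i))) := by ring
      _ ≤ p i * (log Q - log P) + p i * (P * q i / (Q * p i) - 1) := by gcongr
      _ = p i * (log Q - log P) + (P / Q * q i - p i) := by field_simp
  calc ∑ i ∈ s, p i * (log (q i) - log (p i))
      ≤ ∑ i ∈ s, (p i * (log Q - log P) + (P / Q * q i - p i)) := sum_le_sum tangent
    _ = P * (log Q - log P) + (P / Q * Q - P) := by
      rw [sum_add_distrib, sum_sub_distrib, ← sum_mul, ← mul_sum]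
    _ = P * (log Q - log P) := by rw [div_mul_cancel₀ _ hQ.ne', sub_self, add_zero]

section Matrix

variable {V : Type*} [Fintype V]

lemma dotProduct_mulVec_eq_sum_prod {m n R : Type*} [Fintype m] [Fintype n] [CommSemiring R]
    (A : Matrix m n R) (x : n → R) (y : m → R) :
    y ⬝ᵥ A *ᵥ x = ∑ e : m × n, A e.1 e.2 * y e.1 * x e.2 := by
  simp only [dotProduct, mulVec, mul_sum, Fintype.sum_prod_type]
  exact sum_congr rfl fun a _ ↦ sum_congr rfl fun b _ ↦ by ring

lemma mulVec_pow_mulVec {R : Type*} [Semiring R] [DecidableEq V] (A : Matrix V V R) (u : V → R)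
    (k : ℕ) : A *ᵥ (A ^ k *ᵥ u) = A ^ (k + 1) *ᵥ u := by
  rw [mulVec_mulVec, pow_succ']

section Nonneg

variable {R : Type*} [CommSemiring R] [PartialOrder R] [IsOrderedRing R]

lemma mulVec_nonneg {m n : Type*} [Fintype n] {A : Matrix m n R} {x : n → R}
    (hA : ∀ a b, 0 ≤ A a b) (hx : 0 ≤ x) : 0 ≤ A *ᵥ x :=
  fun a ↦ dotProduct_nonneg_of_nonneg (hA a) hx

lemma pow_mulVec_nonneg [DecidableEq V] {A : Matrix V V R} {x : V → R}
    (hA : ∀ a b, 0 ≤ A a b) (hx : 0 ≤ x) (k : ℕ) : 0 ≤ A ^ k *ᵥ x := by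
  induction k with
  | zero => simpa using hx
  | succ k ih => exact mulVec_pow_mulVec A x k ▸ mulVec_nonneg hA ih

lemma mul_eq_zero_of_mulVec_apply_eq_zero {m n : Type*} [Fintype n] {A : Matrix m n R}
    {x : n → R} (hA : ∀ a b, 0 ≤ A a b) (hx : 0 ≤ x) {a : m} (h : (A *ᵥ x) a = 0) (b : n) :
    A a b * x b = 0 :=
  (sum_eq_zero_iff_of_nonneg fun c _ ↦ mul_nonneg (hA a c) (hx c)).1 h b (mem_univ b)

variable [NoZeroDivisors R] {A : Matrix V V R} (hA : ∀ a b, 0 ≤ A a b) (hsymm : A.IsSymm)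
include hA hsymm

lemma mul_mul_eq_zero_of_mulVec {x y : V → R} (hx : 0 ≤ x) (hy : 0 ≤ y) {a b : V}
    (h : A a b * (A *ᵥ x) a * (A *ᵥ y) b = 0) : A a b * y a * x b = 0 := by
  rcases mul_eq_zero.1 h with h | hb
  · rcases mul_eq_zero.1 h with hab | ha
    · rw [hab, zero_mul, zero_mul]
    · rw [mul_right_comm, mul_eq_zero_of_mulVec_apply_eq_zero hA hx ha b, zero_mul]
  · rw [← hsymm.apply, mul_eq_zero_of_mulVec_apply_eq_zero hA hy hb a, zero_mul]

lemma dotProduct_mulVec_eq_zero_of_mulVec {x y : V → R} (hx : 0 ≤ x) (hy : 0 ≤ y)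
    (h : (A *ᵥ x) ⬝ᵥ A *ᵥ (A *ᵥ y) = 0) : y ⬝ᵥ A *ᵥ x = 0 := by
  rw [dotProduct_mulVec_eq_sum_prod] at h ⊢
  have hterm := (sum_eq_zero_iff_of_nonneg fun e _ ↦ mul_nonneg
    (mul_nonneg (hA e.1 e.2) (mulVec_nonneg hA hx e.1)) (mulVec_nonneg hA hy e.2)).1 h
  exact sum_eq_zero fun e he ↦ mul_mul_eq_zero_of_mulVec hA hsymm hx hy (hterm e he)

end Nonneg

/-- The logarithm of `x / y`, summed with weight `x * y`. It is the quantity that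
telescopes along the positions of an edge in a walk. Terms with `x a = 0` or `y a = 0` vanish, so
the value of `log 0` does not matter. -/
noncomputable def logRatioSum (x y : V → ℝ) : ℝ :=
  ∑ a, x a * y a * (log (x a) - log (y a))

lemma logRatioSum_swap (x y : V → ℝ) : logRatioSum y x = -logRatioSum x y := by
  simp only [logRatioSum, ← sum_neg_distrib]
  exact sum_congr rfl fun a _ ↦ by ring

lemma dotProduct_mul_log_le_logRatioSum {x y : V → ℝ} (hx : 0 ≤ x) (hy : 0 ≤ y) :
    (x ⬝ᵥ y) * (log (x ⬝ᵥ y) - log (y ⬝ᵥ y)) ≤ logRatioSum x y := by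
  have log_sum := sum_mul_log_sub_log_le univ (p := fun a ↦ x a * y a) (q := fun a ↦ y a * y a)
    (fun a _ ↦ mul_nonneg (hx a) (hy a)) (fun a _ ↦ mul_self_nonneg (y a))
    (fun a _ h ↦ by rw [mul_self_eq_zero.1 h, mul_zero])
  have split : ∑ a, x a * y a * (log (y a * y a) - log (x a * y a)) = -logRatioSum x y := by
    rw [← logRatioSum_swap, logRatioSum]
    refine sum_congr rfl fun a _ ↦ ?_
    by_cases hxa : x a = 0
    · simp [hxa]
    by_cases hya : y a = 0
    · simp [hya]
    rw [log_mul hya hya, log_mul hxa hya]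
    ring
  change _ ≤ (x ⬝ᵥ y) * (log (y ⬝ᵥ y) - log (x ⬝ᵥ y)) at log_sum
  linarith

section Symmetric

variable {A : Matrix V V ℝ} (hA : ∀ a b, 0 ≤ A a b) (hsymm : A.IsSymm)
include hA hsymm

lemma sum_mul_log_mulVec_sub_log {x y : V → ℝ} (hx : 0 ≤ x) (hy : 0 ≤ y) :
    ∑ e : V × V, A e.1 e.2 * y e.1 * x e.2 *
        (log (A e.1 e.2 * (A *ᵥ x) e.1 * (A *ᵥ y) e.2) - log (A e.1 e.2 * y e.1 * x e.2)) =
      logRatioSum (A *ᵥ x) y + logRatioSum (A *ᵥ y) x := by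
  have split : ∀ a b, A a b * y a * x b *
      (log (A a b * (A *ᵥ x) a * (A *ᵥ y) b) - log (A a b * y a * x b)) =
      y a * (log ((A *ᵥ x) a) - log (y a)) * (A a b * x b) +
        x b * (log ((A *ᵥ y) b) - log (x b)) * (A b a * y a) := by
    intro a b
    rw [hsymm.apply a b]
    by_cases hp : A a b * y a * x b = 0
    · linear_combination (log (A a b * (A *ᵥ x) a * (A *ᵥ y) b) - log (A a b * y a * x b) -
        (log ((A *ᵥ x) a) - log (y a)) - (log ((A *ᵥ y) b) - log (x b))) * hp
    have hq := mt (mul_mul_eq_zero_of_mulVec hA hsymm hx hy) hp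
    simp only [mul_eq_zero, not_or] at hp hq
    rw [log_mul (mul_ne_zero hq.1.1 hq.1.2) hq.2, log_mul hq.1.1 hq.1.2,
      log_mul (mul_ne_zero hp.1.1 hp.1.2) hp.2, log_mul hp.1.1 hp.1.2]
    ring
  have collect : ∀ z w : V → ℝ,
      ∑ a, ∑ b, w a * (log ((A *ᵥ z) a) - log (w a)) * (A a b * z b) =
        logRatioSum (A *ᵥ z) w := by
    intro z w
    refine sum_congr rfl fun a _ ↦ ?_
    rw [← mul_sum, ← dotProduct, ← mulVec]
    ring
  simp only [Fintype.sum_prod_type, split, sum_add_distrib]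
  rw [collect, sum_comm, collect]

lemma logRatioSum_mulVec_add_le {x y : V → ℝ} (hx : 0 ≤ x) (hy : 0 ≤ y) :
    logRatioSum (A *ᵥ x) y + logRatioSum (A *ᵥ y) x ≤
      (y ⬝ᵥ A *ᵥ x) * (log ((A *ᵥ x) ⬝ᵥ A *ᵥ (A *ᵥ y)) - log (y ⬝ᵥ A *ᵥ x)) := by
  rw [← sum_mul_log_mulVec_sub_log hA hsymm hx hy, dotProduct_mulVec_eq_sum_prod,
    dotProduct_mulVec_eq_sum_prod]
  refine sum_mul_log_sub_log_le univ (fun e _ ↦ ?_) (fun e _ ↦ ?_)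
    fun e _ ↦ mul_mul_eq_zero_of_mulVec hA hsymm hx hy
  · exact mul_nonneg (mul_nonneg (hA _ _) (hy _)) (hx _)
  · exact mul_nonneg (mul_nonneg (hA _ _) (mulVec_nonneg hA hx _)) (mulVec_nonneg hA hy _)

end Symmetric

section Moment

variable [DecidableEq V]

/-- The `k`-th moment `⟨u, A ^ k u⟩` of the matrix `A` at the vector `u`: the total weight of the
walks of length `k` in the graph weighted by `A`, with both endpoints weighted by `u`. -/
def moment {R : Type*} [Semiring R] (A : Matrix V V R) (u : V → R) (k : ℕ) : R :=
  u ⬝ᵥ A ^ k *ᵥ u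

lemma moment_zero {R : Type*} [Semiring R] (A : Matrix V V R) (u : V → R) :
    moment A u 0 = u ⬝ᵥ u := by
  rw [moment, pow_zero, one_mulVec]

lemma pow_mulVec_dotProduct_pow_mulVec {R : Type*} [CommSemiring R] {A : Matrix V V R}
    (hsymm : A.IsSymm) (u : V → R) (i j : ℕ) :
    (A ^ i *ᵥ u) ⬝ᵥ A ^ j *ᵥ u = moment A u (i + j) := by
  rw [moment, pow_add, ← mulVec_mulVec, dotProduct_mulVec u, ← mulVec_transpose, (hsymm.pow i).eq]

section Nonneg

variable {R : Type*} [CommSemiring R] [PartialOrder R] [IsOrderedRing R] {A : Matrix V V R}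
  {u : V → R}

lemma moment_nonneg (hA : ∀ a b, 0 ≤ A a b) (hu : 0 ≤ u) (k : ℕ) : 0 ≤ moment A u k :=
  dotProduct_nonneg_of_nonneg hu (pow_mulVec_nonneg hA hu k)

lemma moment_eq_zero_of_moment_add_two_eq_zero [NoZeroDivisors R] (hA : ∀ a b, 0 ≤ A a b)
    (hsymm : A.IsSymm) (hu : 0 ≤ u) {t : ℕ} (ht : t ≠ 0) (h : moment A u (t + 2) = 0) :
    moment A u t = 0 := by
  obtain ⟨s, rfl⟩ := Nat.exists_eq_add_one_of_ne_zero ht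
  have hdot := dotProduct_mulVec_eq_zero_of_mulVec hA hsymm (pow_mulVec_nonneg hA hu 0)
    (pow_mulVec_nonneg hA hu s)
  simp only [mulVec_pow_mulVec, pow_mulVec_dotProduct_pow_mulVec hsymm] at hdot
  refine hdot ?_
  rwa [show 0 + 1 + (s + 1 + 1) = s + 1 + 2 by omega]

end Nonneg

variable {A : Matrix V V ℝ} {u : V → ℝ} (hA : ∀ a b, 0 ≤ A a b) (hsymm : A.IsSymm) (hu : 0 ≤ u)
include hA hsymm hu

lemma logRatioSum_pow_succ_sub_le {i j t : ℕ} (ht : j + (i + 1) = t) :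
    logRatioSum (A ^ (i + 1) *ᵥ u) (A ^ j *ᵥ u) - logRatioSum (A ^ i *ᵥ u) (A ^ (j + 1) *ᵥ u) ≤
      moment A u t * (log (moment A u (t + 2)) - log (moment A u t)) := by
  have h := logRatioSum_mulVec_add_le hA hsymm (pow_mulVec_nonneg hA hu i)
    (pow_mulVec_nonneg hA hu j)
  simp only [mulVec_pow_mulVec, pow_mulVec_dotProduct_pow_mulVec hsymm] at h
  rw [logRatioSum_swap (A ^ i *ᵥ u), ← sub_eq_add_neg, ht,
    show i + 1 + (j + 1 + 1) = t + 2 by omega] at h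
  exact h

lemma two_mul_logRatioSum_pow_le (t : ℕ) :
    2 * logRatioSum (A ^ t *ᵥ u) u ≤
      t * (moment A u t * (log (moment A u (t + 2)) - log (moment A u t))) := by
  set D : ℕ → ℝ := fun i ↦ logRatioSum (A ^ i *ᵥ u) (A ^ (t - i) *ᵥ u) with hD
  calc 2 * logRatioSum (A ^ t *ᵥ u) u = D t - D 0 := by
        simp only [hD, Nat.sub_self, Nat.sub_zero, pow_zero, one_mulVec]
        rw [logRatioSum_swap (A ^ t *ᵥ u) u]
        ring
    _ = ∑ i ∈ range t, (D (i + 1) - D i) := (sum_range_sub D t).symm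
    _ ≤ #(range t) • (moment A u t * (log (moment A u (t + 2)) - log (moment A u t))) := by
        refine sum_le_card_nsmul _ _ _ fun i hi ↦ ?_
        have hi : i < t := mem_range.1 hi
        have h := logRatioSum_pow_succ_sub_le hA hsymm hu (i := i) (j := t - (i + 1)) (t := t)
          (by omega)
        rwa [show t - (i + 1) + 1 = t - i by omega] at h
    _ = t * (moment A u t * (log (moment A u (t + 2)) - log (moment A u t))) := by
        rw [card_range, nsmul_eq_mul]

lemma moment_pow_add_two_le (t : ℕ) :
    moment A u t ^ (t + 2) ≤ moment A u 0 ^ 2 * moment A u (t + 2) ^ t := by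
  rcases eq_or_ne t 0 with rfl | ht
  · simp
  rcases (moment_nonneg hA hu t).eq_or_lt with hm | hm
  · rw [← hm, zero_pow (by omega)]
    exact mul_nonneg (sq_nonneg _) (pow_nonneg (moment_nonneg hA hu _) _)
  have hm₂ : 0 < moment A u (t + 2) := (moment_nonneg hA hu _).lt_of_ne' fun h ↦
    hm.ne' (moment_eq_zero_of_moment_add_two_eq_zero hA hsymm hu ht h)
  have hm₀ : 0 < moment A u 0 := by
    refine (moment_nonneg hA hu 0).lt_of_ne' fun h ↦ hm.ne' ?_
    rw [moment_zero, dotProduct_self_eq_zero] at h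
    rw [moment, h, zero_dotProduct]
  have upper := two_mul_logRatioSum_pow_le hA hsymm hu t
  have lower := dotProduct_mul_log_le_logRatioSum (pow_mulVec_nonneg hA hu t) hu
  rw [dotProduct_comm, ← moment, ← moment_zero A u] at lower
  rw [← log_le_log_iff (by positivity) (by positivity), log_mul (by positivity) (by positivity),
    log_pow, log_pow, log_pow]
  push_cast
  refine le_of_mul_le_mul_left ?_ hm
  linarith

lemma moment_pow_le (t m : ℕ) :
    moment A u t ^ (t + 2 * m) ≤ moment A u 0 ^ (2 * m) * moment A u (t + 2 * m) ^ t := by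
  induction m with
  | zero => simp
  | succ m ih =>
    rcases eq_or_ne (t + 2 * m) 0 with hs | hs
    · obtain ⟨rfl, rfl⟩ : t = 0 ∧ m = 0 := by omega
      simp
    have hm := moment_nonneg hA hu
    have hm₀ := hm 0
    refine le_of_pow_le_pow_left₀ hs
      (mul_nonneg (pow_nonneg (hm _) _) (pow_nonneg (hm _) _)) ?_
    set s := t + 2 * m with hs_def
    rw [show t + 2 * (m + 1) = s + 2 by omega]
    calc (moment A u t ^ (s + 2)) ^ s
        = (moment A u t ^ s) ^ (s + 2) := pow_right_comm _ _ _
      _ ≤ (moment A u 0 ^ (2 * m) * moment A u s ^ t) ^ (s + 2) :=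
          pow_le_pow_left₀ (pow_nonneg (hm t) s) ih _
      _ = moment A u 0 ^ (2 * m * (s + 2)) * (moment A u s ^ (s + 2)) ^ t := by ring
      _ ≤ moment A u 0 ^ (2 * m * (s + 2)) * (moment A u 0 ^ 2 * moment A u (s + 2) ^ s) ^ t := by
          gcongr
          · exact pow_nonneg (hm s) _
          · exact moment_pow_add_two_le hA hsymm hu s
      _ = (moment A u 0 ^ (2 * (m + 1)) * moment A u (s + 2) ^ t) ^ s := by
          rw [hs_def]
          ring

end Moment

end Matrix

section PathGraph

variable {V : Type*} (G : SimpleGraph V)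

/-- A homomorphism from the path with no edges is a vertex. This is the base case of counting the
homomorphisms from paths by peeling off the first vertex. -/
def pathGraphHomOneEquiv : (SimpleGraph.pathGraph 1 →g G) ≃ V where
  toFun f := f 0
  invFun a := ⟨fun _ ↦ a, fun {i j} h ↦ (h.ne (Subsingleton.elim i j)).elim⟩
  left_inv f := DFunLike.ext _ _ fun i ↦ congrArg f (Subsingleton.elim 0 i)
  right_inv _ := rfl

/-- A homomorphism from a path with at least one edge is its restriction to the path without the
first vertex, together with a neighbor of the value at the second vertex. This is the inductive step
of the same count. -/
def pathGraphHomSuccEquiv (k : ℕ) :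
    (SimpleGraph.pathGraph (k + 2) →g G) ≃
      Σ f : SimpleGraph.pathGraph (k + 1) →g G, G.neighborSet (f 0) where
  toFun f := ⟨⟨fun i ↦ f i.succ, fun {i j} h ↦ f.map_rel (by
      simpa [SimpleGraph.pathGraph_adj] using h)⟩,
    f 0, f.map_rel (by simp [SimpleGraph.pathGraph_adj])⟩
  invFun p := ⟨Fin.cons p.2.1 p.1, fun {i j} h ↦ by
    have head (j : Fin (k + 1)) (hj : (j : ℕ) = 0) : G.Adj p.2.1 (p.1 j) := by
      rw [Fin.ext (b := 0) hj]
      exact p.2.2.symm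
    rw [SimpleGraph.pathGraph_adj] at h
    cases i using Fin.cases with
    | zero => cases j using Fin.cases with
      | zero => simp at h
      | succ j => exact head j (by simpa [eq_comm] using h)
    | succ i => cases j using Fin.cases with
      | zero => exact (head i (by simpa using h)).symm
      | succ j => exact p.1.map_rel (by simpa [SimpleGraph.pathGraph_adj] using h)⟩
  left_inv f := DFunLike.coe_injective (Fin.cons_self_tail f)
  right_inv _ := rfl

variable [Fintype V] [DecidableEq V] [DecidableRel G.Adj]

open scoped Classical in
lemma sum_pathGraphHom_apply_zero {R : Type*} [CommSemiring R] (k : ℕ) (g : V → R) :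
    ∑ f : SimpleGraph.pathGraph (k + 1) →g G, g (f 0) = g ⬝ᵥ G.adjMatrix R ^ k *ᵥ 1 := by
  induction k generalizing g with
  | zero =>
    rw [pow_zero, one_mulVec, dotProduct_one]
    exact Fintype.sum_equiv (pathGraphHomOneEquiv G) _ _ fun _ ↦ rfl
  | succ k ih =>
    calc ∑ f : SimpleGraph.pathGraph (k + 2) →g G, g (f 0)
        = ∑ f : SimpleGraph.pathGraph (k + 1) →g G, ∑ a : G.neighborSet (f 0), g a := by
          rw [← Fintype.sum_sigma']
          exact Fintype.sum_equiv (pathGraphHomSuccEquiv G k) _ _ fun _ ↦ rfl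
      _ = ∑ f : SimpleGraph.pathGraph (k + 1) →g G, (G.adjMatrix R *ᵥ g) (f 0) := by
          simp only [SimpleGraph.adjMatrix_mulVec_apply]
          exact sum_congr rfl fun f _ ↦ (sum_subtype _ (by simp) _).symm
      _ = g ⬝ᵥ G.adjMatrix R ^ (k + 1) *ᵥ 1 := by
          rw [ih, ← mulVec_pow_mulVec, dotProduct_mulVec g, ← mulVec_transpose,
            SimpleGraph.transpose_adjMatrix]

lemma homCount_pathGraph_eq_moment {R : Type*} [CommSemiring R] (k : ℕ) :
    (homCount (SimpleGraph.pathGraph (k + 1)) G : R) = moment (G.adjMatrix R) 1 k := by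
  classical
  rw [moment, ← sum_pathGraphHom_apply_zero, homCount, Nat.card_eq_fintype_card]
  simp

end PathGraph

theorem es_homCount_general {V : Type*} [Fintype V] (G : SimpleGraph V) {t k : ℕ} (htk : t ≤ k)
    (heven : Even (k - t)) :
    homCount (SimpleGraph.pathGraph (t + 1)) G ^ k ≤
      Fintype.card V ^ (k - t) * homCount (SimpleGraph.pathGraph (k + 1)) G ^ t := by
  classical
  obtain ⟨m, hm⟩ := heven.two_dvd
  obtain rfl : k = t + 2 * m := by omega
  have hA : ∀ a b, 0 ≤ G.adjMatrix ℝ a b := fun a b ↦ by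
    rw [SimpleGraph.adjMatrix_apply]; positivity
  have h := moment_pow_le hA G.isSymm_adjMatrix (zero_le_one (α := V → ℝ)) t m
  rw [moment_zero, one_dotProduct_one, ← homCount_pathGraph_eq_moment,
    ← homCount_pathGraph_eq_moment] at h
  rw [hm]
  exact_mod_cast h

/-- The homomorphism-count form of the Erdős–Simonovits conjecture: for odd
`k ≥ t ≥ 1`, `n^{k−t} · |Hom(P_k; G)|^t ≥ |Hom(P_t; G)|^k`. -/
theorem es_homCount (n t : ℕ) (ht : Odd t) (ht1 : 1 ≤ t) (G : SimpleGraph (Fin n)) :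
    ∀ k : ℕ, Odd k → t ≤ k →
      n ^ (k - t) * homCount (SimpleGraph.pathGraph (k + 1)) G ^ t ≥
        homCount (SimpleGraph.pathGraph (t + 1)) G ^ k := by
  intro k hk htk
  simpa only [Fintype.card_fin] using es_homCount_general G htk (Nat.Odd.sub_odd hk ht)
end
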